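/- Let H₁, H₂, H₃ be complex Hilbert spaces, let T : H₁ → H₂ and S : H₂ → H₃ be closed, densely defined linear operators with Range T ⊆ Ker S, and set H := Ker S ∩ Ker T*. Suppose there is a constant c > 0 such that ‖Ta‖² ≥ c‖a‖² for every a ∈ Dom T orthogonal to Ker T, and ‖S*b‖² ≥ c‖b‖² for every b ∈ Dom S* orthogonal to Ker S*. Then every u ∈ Dom S ∩ Dom T* that is orthogonal to H satisfies ‖Su‖² + ‖T*u‖² ≥ c‖u‖². -/

import Mathlib

/-!
A lower bound `c * ‖y‖² ≤ ‖B y‖²` off `Ker B` passes to the adjoint `A` of `B`: in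
`⟪x, B y⟫ = ⟪A x, y⟫` one may take `y ⊥ Ker B`, so `c * |⟪x, B y⟫|² ≤ ‖A x‖² * ‖B y‖²`, and when
`x ⊥ Ker A = (Range B)ᗮ` the vectors `B y` may be let tend to `x`. Hence `T*` is bounded below off
`Ker T*`, and `S = S**` off `Ker S`.

Split `u = p + q` with `p ∈ Ker S` and `q ⊥ Ker S`. Since `(Ker S)ᗮ ≤ (Range T)ᗮ = Ker T*`, we get
`S u = S q` and `T* u = T* p`, and `p ⊥ Ker T*` because `u ⊥ Ker S ∩ Ker T*`. The bounds for `S q`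
and `T* p` add up to the estimate by Pythagoras.
-/

section Kernel

variable {R E F : Type*} [Ring R] [AddCommGroup E] [Module R E] [AddCommGroup F] [Module R F]

/-- The kernel of a partially defined linear map, as a submodule of the ambient space rather than
of the domain, so that orthogonal complements and projections in the ambient space apply to it. -/
def pmapKernel (A : E →ₗ.[R] F) : Submodule R E :=
  (LinearMap.ker A.toFun).map A.domain.subtype

theorem mem_pmapKernel_iff {A : E →ₗ.[R] F} {x : E} :
    x ∈ pmapKernel A ↔ ∃ h : x ∈ A.domain, A ⟨x, h⟩ = 0 := by
  constructor
  · rintro ⟨y, hy, rfl⟩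
    exact ⟨y.2, hy⟩
  · rintro ⟨h, hx⟩
    exact ⟨⟨x, h⟩, hx, rfl⟩

theorem mem_pmapKernel_iff_mem_graph {A : E →ₗ.[R] F} {x : E} :
    x ∈ pmapKernel A ↔ (x, (0 : F)) ∈ A.graph := by
  simp [mem_pmapKernel_iff, LinearPMap.mem_graph_iff]

theorem exists_apply_sub_eq_of_mem_pmapKernel {A : E →ₗ.[R] F} {k : E} (hk : k ∈ pmapKernel A)
    (x : A.domain) : ∃ h : (x : E) - k ∈ A.domain, A ⟨x - k, h⟩ = A x := by
  obtain ⟨hkA, hk0⟩ := mem_pmapKernel_iff.1 hk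
  refine ⟨A.domain.sub_mem x.2 hkA, ?_⟩
  calc A (x - ⟨k, hkA⟩) = A x - A ⟨k, hkA⟩ := A.map_sub _ _
    _ = A x := by rw [hk0, sub_zero]

end Kernel

theorem isClosed_pmapKernel {R E F : Type*} [CommRing R] [AddCommGroup E] [Module R E]
    [TopologicalSpace E] [AddCommGroup F] [Module R F] [TopologicalSpace F]
    {A : E →ₗ.[R] F} (hA : A.IsClosed) : IsClosed (pmapKernel A : Set E) := by
  have graph_slice : (pmapKernel A : Set E) = (fun x : E ↦ (x, (0 : F))) ⁻¹' A.graph :=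
    Set.ext fun _ ↦ mem_pmapKernel_iff_mem_graph
  rw [graph_slice]
  exact IsClosed.preimage (by fun_prop) hA

section InnerProduct

variable {𝕜 E F G : Type*} [RCLike 𝕜] [NormedAddCommGroup E] [InnerProductSpace 𝕜 E]
  [NormedAddCommGroup F] [InnerProductSpace 𝕜 F] [NormedAddCommGroup G] [InnerProductSpace 𝕜 G]

theorem mk_zero_mem_adjoint_iff {g : Submodule 𝕜 (E × F)} {y : F} :
    (y, (0 : E)) ∈ g.adjoint ↔ y ∈ (g.map (LinearMap.snd 𝕜 E F))ᗮ := by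
  simpa [Submodule.mem_orthogonal] using forall_comm

theorem submodule_adjoint_adjoint_of_isClosed [CompleteSpace E] [CompleteSpace F]
    {g : Submodule 𝕜 (E × F)} (hg : IsClosed (g : Set (E × F))) : g.adjoint.adjoint = g := by
  let g₂ : Submodule 𝕜 (WithLp 2 (E × F)) :=
    g.comap (WithLp.linearEquiv 2 𝕜 (E × F)).toLinearMap
  have hg₂ : IsClosed (g₂ : Set (WithLp 2 (E × F))) :=
    hg.preimage (WithLp.prod_continuous_ofLp 2 E F)
  have hg₂_biorthogonal : g₂ᗮᗮ = g₂ := by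
    rw [Submodule.orthogonal_orthogonal_eq_closure, hg₂.submodule_topologicalClosure_eq]
  apply le_antisymm
  · intro x hx
    suffices WithLp.toLp 2 x ∈ g₂ᗮᗮ by rwa [hg₂_biorthogonal] at this
    rw [Submodule.mem_orthogonal]
    intro z hz
    have rotated_mem : (-z.snd, z.fst) ∈ g.adjoint := by
      rw [Submodule.mem_adjoint_iff]
      intro a b hab
      have := (Submodule.mem_orthogonal _ _).1 hz (WithLp.toLp 2 (a, b)) hab
      simp only [WithLp.prod_inner_apply, WithLp.ofLp_fst, WithLp.ofLp_snd] at this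
      rw [inner_neg_right]
      linear_combination -this
    simpa [add_comm] using (Submodule.mem_adjoint_iff _ _).1 hx _ _ rotated_mem
  · intro x hx
    rw [Submodule.mem_adjoint_iff]
    intro y w hyw
    have := congrArg (starRingEnd 𝕜) ((Submodule.mem_adjoint_iff _ _).1 hyw _ _ hx)
    simp only [map_sub, inner_conj_symm, map_zero] at this
    linear_combination -this

theorem pmapKernel_eq_orthogonal_range {A : E →ₗ.[𝕜] F} {B : F →ₗ.[𝕜] E}
    (h : A.graph = B.graph.adjoint) : pmapKernel A = (LinearMap.range B.toFun)ᗮ := by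
  ext x
  rw [mem_pmapKernel_iff_mem_graph, h, mk_zero_mem_adjoint_iff, B.graph_map_snd_eq_range]

theorem pmapKernel_adjoint [CompleteSpace E] {A : E →ₗ.[𝕜] F} (hA : Dense (A.domain : Set E)) :
    pmapKernel A.adjoint = (LinearMap.range A.toFun)ᗮ :=
  pmapKernel_eq_orthogonal_range (LinearPMap.adjoint_graph_eq_graph_adjoint hA)

theorem pmapKernel_eq_orthogonal_range_adjoint [CompleteSpace E] [CompleteSpace F]
    {A : E →ₗ.[𝕜] F} (hA : Dense (A.domain : Set E)) (hA_closed : A.IsClosed) :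
    pmapKernel A = (LinearMap.range A.adjoint.toFun)ᗮ :=
  pmapKernel_eq_orthogonal_range <| by
    rw [LinearPMap.adjoint_graph_eq_graph_adjoint hA,
      submodule_adjoint_adjoint_of_isClosed hA_closed]

/-- The lower bound `c * ‖x‖² ≤ ‖A x‖²` off the kernel of `A`; for closed densely defined `A`, it
says that `A* A` has no spectrum in the open interval from `0` to `c`. -/
def HasSpectralGap (A : E →ₗ.[𝕜] F) (c : ℝ) : Prop :=
  ∀ x : A.domain, (x : E) ∈ (pmapKernel A)ᗮ → c * ‖(x : E)‖ ^ 2 ≤ ‖A x‖ ^ 2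

namespace HasSpectralGap

variable {c : ℝ}

theorem mul_norm_inner_sq_le {A : E →ₗ.[𝕜] F} {B : F →ₗ.[𝕜] E} (hB : HasSpectralGap B c)
    (hc : 0 ≤ c) [(pmapKernel B).HasOrthogonalProjection] (hAB : A.IsFormalAdjoint B)
    (x : A.domain) (y : B.domain) : c * ‖inner 𝕜 (x : E) (B y)‖ ^ 2 ≤ ‖A x‖ ^ 2 * ‖B y‖ ^ 2 := by
  obtain ⟨hz, hBz⟩ := exists_apply_sub_eq_of_mem_pmapKernel
    ((pmapKernel B).starProjection_apply_mem (y : F)) y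
  set z : B.domain := ⟨_, hz⟩
  have gap_z : c * ‖(z : F)‖ ^ 2 ≤ ‖B z‖ ^ 2 :=
    hB z ((pmapKernel B).sub_starProjection_mem_orthogonal (y : F))
  rw [← hBz, ← hAB x z]
  calc c * ‖inner 𝕜 (A x) (z : F)‖ ^ 2
      ≤ c * (‖A x‖ * ‖(z : F)‖) ^ 2 := by gcongr; exact norm_inner_le_norm _ _
    _ = ‖A x‖ ^ 2 * (c * ‖(z : F)‖ ^ 2) := by ring
    _ ≤ ‖A x‖ ^ 2 * ‖B z‖ ^ 2 := by gcongr

theorem of_isFormalAdjoint [CompleteSpace E] {A : E →ₗ.[𝕜] F} {B : F →ₗ.[𝕜] E}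
    (hB : HasSpectralGap B c) (hc : 0 ≤ c) [(pmapKernel B).HasOrthogonalProjection]
    (hAB : A.IsFormalAdjoint B) (hker : (LinearMap.range B.toFun)ᗮ ≤ pmapKernel A) :
    HasSpectralGap A c := by
  intro x hx
  have x_mem_closure : (x : E) ∈ (LinearMap.range B.toFun).topologicalClosure := by
    rw [← Submodule.orthogonal_orthogonal_eq_closure]
    exact Submodule.orthogonal_le hker hx
  have bound_self : c * ‖inner 𝕜 (x : E) (x : E)‖ ^ 2 ≤ ‖A x‖ ^ 2 * ‖(x : E)‖ ^ 2 := by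
    have isClosed_bound :
        IsClosed {v : E | c * ‖inner 𝕜 (x : E) v‖ ^ 2 ≤ ‖A x‖ ^ 2 * ‖v‖ ^ 2} :=
      isClosed_le (by fun_prop) (by fun_prop)
    refine closure_minimal ?_ isClosed_bound x_mem_closure
    rintro _ ⟨y, rfl⟩
    exact hB.mul_norm_inner_sq_le hc hAB x y
  rcases eq_or_ne (x : E) 0 with hx0 | hx0
  · simp [hx0]
  · refine le_of_mul_le_mul_right ?_ (pow_pos (norm_pos_iff.2 hx0) 2)
    calc c * ‖(x : E)‖ ^ 2 * ‖(x : E)‖ ^ 2 = c * ‖inner 𝕜 (x : E) (x : E)‖ ^ 2 := by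
          rw [← inner_self_re_eq_norm, inner_self_eq_norm_sq]; ring
      _ ≤ ‖A x‖ ^ 2 * ‖(x : E)‖ ^ 2 := bound_self

theorem adjoint [CompleteSpace E] [CompleteSpace F] {A : E →ₗ.[𝕜] F} (hgap : HasSpectralGap A c)
    (hc : 0 ≤ c) (hA : Dense (A.domain : Set E)) (hker : IsClosed (pmapKernel A : Set E)) :
    HasSpectralGap A.adjoint c := by
  have : CompleteSpace (pmapKernel A) := hker.completeSpace_coe
  exact hgap.of_isFormalAdjoint hc (LinearPMap.adjoint_isFormalAdjoint hA)
    (pmapKernel_adjoint hA).ge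

theorem of_adjoint [CompleteSpace E] [CompleteSpace F] {A : E →ₗ.[𝕜] F}
    (hgap : HasSpectralGap A.adjoint c) (hc : 0 ≤ c) (hA : Dense (A.domain : Set E))
    (hA_closed : A.IsClosed) : HasSpectralGap A c := by
  have : CompleteSpace (pmapKernel A.adjoint) :=
    (isClosed_pmapKernel (LinearPMap.adjoint_isClosed hA)).completeSpace_coe
  exact hgap.of_isFormalAdjoint hc (LinearPMap.adjoint_isFormalAdjoint hA).symm
    (pmapKernel_eq_orthogonal_range_adjoint hA hA_closed).ge

end HasSpectralGap

theorem starProjection_mem_orthogonal_of_orthogonal_le {K L : Submodule 𝕜 E}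
    [K.HasOrthogonalProjection] (hKL : Kᗮ ≤ L) {u : E} (hu : u ∈ (K ⊓ L)ᗮ) :
    K.starProjection u ∈ Lᗮ := by
  rw [Submodule.mem_orthogonal]
  intro w hw
  have proj_mem : K.starProjection w ∈ K ⊓ L := by
    refine ⟨K.starProjection_apply_mem w, ?_⟩
    simpa using L.sub_mem hw (hKL (K.sub_starProjection_mem_orthogonal w))
  rw [← K.inner_starProjection_left_eq_right]
  exact (Submodule.mem_orthogonal _ _).1 hu _ proj_mem

theorem HasSpectralGap.mul_norm_sq_le_add {A : E →ₗ.[𝕜] F} {B : E →ₗ.[𝕜] G} {c : ℝ}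
    [(pmapKernel A).HasOrthogonalProjection] (hA : HasSpectralGap A c) (hB : HasSpectralGap B c)
    (hAB : (pmapKernel A)ᗮ ≤ pmapKernel B) {u : E} (huA : u ∈ A.domain) (huB : u ∈ B.domain)
    (hu : u ∈ (pmapKernel A ⊓ pmapKernel B)ᗮ) :
    c * ‖u‖ ^ 2 ≤ ‖A ⟨u, huA⟩‖ ^ 2 + ‖B ⟨u, huB⟩‖ ^ 2 := by
  set p := (pmapKernel A).starProjection u
  have hp : p ∈ pmapKernel A := (pmapKernel A).starProjection_apply_mem u
  have hq : u - p ∈ (pmapKernel A)ᗮ := (pmapKernel A).sub_starProjection_mem_orthogonal u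
  have bound_q : c * ‖u - p‖ ^ 2 ≤ ‖A ⟨u, huA⟩‖ ^ 2 := by
    obtain ⟨hqA, hAq⟩ := exists_apply_sub_eq_of_mem_pmapKernel hp ⟨u, huA⟩
    simpa only [hAq] using hA ⟨u - p, hqA⟩ hq
  have bound_p : c * ‖p‖ ^ 2 ≤ ‖B ⟨u, huB⟩‖ ^ 2 := by
    obtain ⟨hpB, hBp⟩ := exists_apply_sub_eq_of_mem_pmapKernel (hAB hq) ⟨u, huB⟩
    simp only [sub_sub_cancel] at hpB hBp
    simpa only [hBp] using
      hB ⟨p, hpB⟩ (starProjection_mem_orthogonal_of_orthogonal_le hAB hu)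
  have pythagoras : ‖u‖ ^ 2 = ‖p‖ ^ 2 + ‖u - p‖ ^ 2 := by
    simpa [sq] using norm_add_sq_eq_norm_sq_add_norm_sq_of_inner_eq_zero p (u - p)
      ((Submodule.mem_orthogonal _ _).1 hq p hp)
  rw [pythagoras, mul_add]
  linarith

end InnerProduct

theorem estimate_of_gaps_general {𝕜 H₁ H₂ H₃ : Type*} [RCLike 𝕜]
    [NormedAddCommGroup H₁] [InnerProductSpace 𝕜 H₁] [CompleteSpace H₁]
    [NormedAddCommGroup H₂] [InnerProductSpace 𝕜 H₂] [CompleteSpace H₂]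
    [NormedAddCommGroup H₃] [InnerProductSpace 𝕜 H₃] [CompleteSpace H₃]
    {T : H₁ →ₗ.[𝕜] H₂} {S : H₂ →ₗ.[𝕜] H₃}
    (hT_dense : Dense (T.domain : Set H₁)) (hT_ker : IsClosed (pmapKernel T : Set H₁))
    (hS_dense : Dense (S.domain : Set H₂)) (hS_closed : S.IsClosed)
    (hST : LinearMap.range T.toFun ≤ pmapKernel S) {c : ℝ} (hc : 0 ≤ c)
    (hT_gap : HasSpectralGap T c) (hS_gap : HasSpectralGap S.adjoint c)
    {u : H₂} (huS : u ∈ S.domain) (huT : u ∈ T.adjoint.domain)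
    (hu : u ∈ (pmapKernel S ⊓ pmapKernel T.adjoint)ᗮ) :
    c * ‖u‖ ^ 2 ≤ ‖S ⟨u, huS⟩‖ ^ 2 + ‖T.adjoint ⟨u, huT⟩‖ ^ 2 := by
  have : CompleteSpace (pmapKernel S) := (isClosed_pmapKernel hS_closed).completeSpace_coe
  have orthogonal_ker_le : (pmapKernel S)ᗮ ≤ pmapKernel T.adjoint :=
    (Submodule.orthogonal_le hST).trans (pmapKernel_adjoint hT_dense).ge
  exact (hS_gap.of_adjoint hc hS_dense hS_closed).mul_norm_sq_le_add
    (hT_gap.adjoint hc hT_dense hT_ker) orthogonal_ker_le huS huT hu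

/-- From spectral gaps for `T` and `S*` to the basic estimate: if `‖Ta‖² ≥ c‖a‖²` for all
`a ∈ Dom T ⊥ Ker T` and `‖S*b‖² ≥ c‖b‖²` for all `b ∈ Dom S* ⊥ Ker S*`, then every
`u ∈ Dom S ∩ Dom T*` orthogonal to `H := Ker S ∩ Ker T*` satisfies
`‖Su‖² + ‖T*u‖² ≥ c‖u‖²`. -/
theorem estimate_of_gaps
    {H₁ H₂ H₃ : Type*} [NormedAddCommGroup H₁] [InnerProductSpace ℂ H₁] [CompleteSpace H₁]
    [NormedAddCommGroup H₂] [InnerProductSpace ℂ H₂] [CompleteSpace H₂]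
    [NormedAddCommGroup H₃] [InnerProductSpace ℂ H₃] [CompleteSpace H₃]
    (T : H₁ →ₗ.[ℂ] H₂) (S : H₂ →ₗ.[ℂ] H₃)
    (hT_dense : Dense (T.domain : Set H₁)) (hT_closed : T.IsClosed)
    (hS_dense : Dense (S.domain : Set H₂)) (hS_closed : S.IsClosed)
    (hST : LinearMap.range T.toFun ≤ (LinearMap.ker S.toFun).map S.domain.subtype)
    (c : ℝ) (hc : 0 < c)
    (hT_gap : ∀ a : T.domain,
      (a : H₁) ∈ ((LinearMap.ker T.toFun).map T.domain.subtype)ᗮ →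
        c * ‖(a : H₁)‖ ^ 2 ≤ ‖T a‖ ^ 2)
    (hS_gap : ∀ b : S.adjoint.domain,
      (b : H₃) ∈ ((LinearMap.ker S.adjoint.toFun).map S.adjoint.domain.subtype)ᗮ →
        c * ‖(b : H₃)‖ ^ 2 ≤ ‖S.adjoint b‖ ^ 2) :
    ∀ (u : H₂) (huS : u ∈ S.domain) (huT : u ∈ T.adjoint.domain),
      u ∈ (((LinearMap.ker S.toFun).map S.domain.subtype) ⊓
          ((LinearMap.ker T.adjoint.toFun).map T.adjoint.domain.subtype))ᗮ →
        c * ‖u‖ ^ 2 ≤ ‖S ⟨u, huS⟩‖ ^ 2 + ‖T.adjoint ⟨u, huT⟩‖ ^ 2 := fun _ huS huT hu ↦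
  estimate_of_gaps_general hT_dense (isClosed_pmapKernel hT_closed) hS_dense hS_closed hST hc.le
    hT_gap hS_gap huS huT hu
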